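/- Let L be the unramified quadratic extension of ℚ₂ and let e ∈ ℚ₂* be a non-square with v₂(e) ≡ 0 (mod 4). Then −e ∈ N_{L/ℚ₂}(L*), and every x ∈ ℚ₂* with x(x² − e) ∈ N_{L/ℚ₂}(L*) satisfies x ∈ N_{L/ℚ₂}(L*) and x² − e ∈ N_{L/ℚ₂}(L*). -/

import Mathlib

open Module

/-- `normGroup K L` is the set of norms `N_{L/K}(t)` of nonzero elements `t ∈ L`. -/
def normGroup (K L : Type*) [Field K] [Field L] [Algebra K L] : Set K :=
  {x : K | ∃ t : L, t ≠ 0 ∧ Algebra.norm K t = x}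

/-- `v` is the normalized discrete valuation of the `p`-adic field `K`. -/
def IsNormalizedValuation (p : ℕ) [Fact p.Prime] {K : Type*} [Field K] [Algebra ℚ_[p] K]
    (v : K → ℤ) : Prop :=
  (∀ x y : K, x ≠ 0 → y ≠ 0 → v (x * y) = v x + v y) ∧
  (∀ x y : K, x ≠ 0 → y ≠ 0 → x + y ≠ 0 → min (v x) (v y) ≤ v (x + y)) ∧
  (∀ n : ℤ, ∃ x : K, x ≠ 0 ∧ v x = n) ∧
  0 < v (algebraMap ℚ_[p] K (p : ℚ_[p]))

/-!
On the unramified quadratic extension `L` of `ℚ_[p]` the norms are exactly the nonzero elements of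
even valuation. Automorphisms of `L` are isometries, so `‖N y‖ = ‖y‖ ^ 2` and norms have even
valuation. Conversely, `1` and an integer `t` whose residue lies outside the prime field give a
norm form `a² + abT + b²N` of unit discriminant; such a form represents every unit modulo `p`, and
Hensel's lemma lifts the representation.

Hence if `x` and `x² - e` are not both norms while their product is, then `x` has odd valuation.
In that case `v(x²) ≡ 2` and `v(e) ≡ 0` modulo `4` are distinct even integers, so `v(x² - e)` is
their minimum, which is even: a contradiction.
-/

section QuadraticExtension

lemma ne_zero_of_mem_normGroup {K L : Type*} [Field K] [Field L] [Algebra K L]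
    [FiniteDimensional K L] {x : K} (hx : x ∈ normGroup K L) : x ≠ 0 := by
  obtain ⟨t, ht, rfl⟩ := hx
  exact Algebra.norm_ne_zero_iff.mpr ht

lemma norm_algebraMap_add_algebraMap_mul {R S : Type*} [CommRing R] [StrongRankCondition R]
    [CommRing S] [Algebra R S] [Algebra.IsQuadraticExtension R S] (a b : R) (t : S) :
    Algebra.norm R (algebraMap R S a + algebraMap R S b * t) =
      a ^ 2 + a * b * Algebra.trace R S t + b ^ 2 * Algebra.norm R t := by
  have B : Basis (Fin 2) R S :=
    finBasisOfFinrankEq R S (Algebra.IsQuadraticExtension.finrank_eq_two R S)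
  simp only [Algebra.norm_eq_matrix_det B, Algebra.trace_eq_matrix_trace B, map_add, map_mul,
    AlgHom.commutes, Matrix.algebraMap_eq_diagonal, Matrix.det_fin_two, Matrix.trace_fin_two,
    Matrix.add_apply, Matrix.diagonal_mul, Matrix.diagonal_apply_eq, Pi.algebraMap_apply,
    Algebra.algebraMap_self, RingHom.id_apply, Matrix.diagonal_apply_ne _ zero_ne_one,
    Matrix.diagonal_apply_ne _ one_ne_zero]
  ring

lemma not_surjective_algebraMap (K L : Type*) [Field K] [Field L] [Algebra K L]
    [Algebra.IsQuadraticExtension K L] : ¬ Function.Surjective (algebraMap K L) := fun h => by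
  have hone := (Subalgebra.bot_eq_top_iff_finrank_eq_one (F := K) (E := L)).mp
    (eq_top_iff.mpr fun y _ => Algebra.mem_bot.mpr (h y))
  have htwo := Algebra.IsQuadraticExtension.finrank_eq_two K L
  omega

end QuadraticExtension

section FiniteField

open Polynomial

variable {F : Type*} [Field F] [Finite F] {T N : F}

lemma discrim_ne_zero_of_forall_quadratic_ne_zero (h : ∀ c : F, c ^ 2 + c * T + N ≠ 0) :
    T ^ 2 - 4 * N ≠ 0 := by
  intro hD
  by_cases hF : ringChar F = 2
  · have : CharP F 2 := ringChar.of_eq hF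
    have h2 : (2 : F) = 0 := CharTwo.two_eq_zero
    have hT : T = 0 := pow_eq_zero_iff two_ne_zero |>.mp (by linear_combination hD + 2 * N * h2)
    obtain ⟨c, hc⟩ := FiniteField.isSquare_of_char_two hF N
    exact h c (by linear_combination c * hT + hc + c ^ 2 * h2)
  · have h2 : (2 : F) ≠ 0 := Ring.two_ne_zero hF
    refine h (-T / 2) ?_
    field_simp
    linear_combination -hD

lemma exists_quadratic_form_eq_of_discrim_ne_zero (hD : T ^ 2 - 4 * N ≠ 0) (u : F) :
    ∃ a b : F, a ^ 2 + a * b * T + b ^ 2 * N = u := by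
  have := Fintype.ofFinite F
  by_cases hF : ringChar F = 2
  · obtain ⟨a, rfl⟩ := FiniteField.isSquare_of_char_two hF u
    exact ⟨a, 0, by ring⟩
  have h2 : (2 : F) ≠ 0 := Ring.two_ne_zero hF
  -- Completing the square: `4 * (a² + abT + b²N) = (2a + bT)² - (T² - 4N) * b²`.
  obtain ⟨x, b, hxb⟩ := FiniteField.exists_root_sum_quadratic (f := X ^ 2)
    (g := C (-(T ^ 2 - 4 * N)) * X ^ 2 + C 0 * X + C (-(4 * u))) (degree_X_pow 2)
    (degree_quadratic (neg_ne_zero.mpr hD)) (FiniteField.odd_card_of_char_ne_two hF)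
  simp only [eval_add, eval_mul, eval_pow, eval_X, eval_C] at hxb
  refine ⟨(x - b * T) / 2, b, ?_⟩
  field_simp
  linear_combination hxb

end FiniteField

section PadicInt

open Polynomial

variable {p : ℕ} [Fact p.Prime]

lemma toZMod_eq_zero_iff_norm_lt_one {z : ℤ_[p]} : PadicInt.toZMod z = 0 ↔ ‖z‖ < 1 := by
  rw [← RingHom.mem_ker, PadicInt.ker_toZMod, IsLocalRing.mem_maximalIdeal,
    PadicInt.mem_nonunits]

lemma toZMod_ne_zero_iff_norm_eq_one {z : ℤ_[p]} : PadicInt.toZMod z ≠ 0 ↔ ‖z‖ = 1 := by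
  rw [Ne, toZMod_eq_zero_iff_norm_lt_one, not_lt, (PadicInt.norm_le_one z).ge_iff_eq', eq_comm]

lemma exists_root_quadratic_of_toZMod {A B C₀ r : ℤ_[p]}
    (hr : PadicInt.toZMod (A * r ^ 2 + B * r + C₀) = 0)
    (hr' : PadicInt.toZMod (2 * A * r + B) ≠ 0) :
    ∃ z : ℤ_[p], A * z ^ 2 + B * z + C₀ = 0 := by
  let f : ℤ_[p][X] := C A * X ^ 2 + C B * X + C C₀
  have hf (z : ℤ_[p]) : f.aeval z = A * z ^ 2 + B * z + C₀ := by simp [f]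
  have hf' : f.derivative.aeval r = 2 * A * r + B := by
    simp only [f, derivative_C_mul, derivative_C, derivative_X_sq, derivative_X,
      mul_one, add_zero, map_add, map_mul, aeval_C, aeval_X, Algebra.algebraMap_self,
      RingHom.id_apply]
    ring
  obtain ⟨z, hz, -⟩ := hensels_lemma (F := f) (a := r) (by
    rw [hf, hf', toZMod_ne_zero_iff_norm_eq_one.mp hr', one_pow]
    exact toZMod_eq_zero_iff_norm_lt_one.mp hr)
  exact ⟨z, (hf z).symm.trans hz⟩

lemma exists_quadratic_form_eq_of_norm_discrim_eq_one {T N u : ℤ_[p]} (hD : ‖T ^ 2 - 4 * N‖ = 1)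
    (hu : ‖u‖ = 1) : ∃ a b : ℤ_[p], a ^ 2 + a * b * T + b ^ 2 * N = u := by
  rw [← toZMod_ne_zero_iff_norm_eq_one] at hD hu
  simp only [map_sub, map_mul, map_pow, map_ofNat] at hD
  obtain ⟨α, β, hαβ⟩ := exists_quadratic_form_eq_of_discrim_ne_zero hD (PadicInt.toZMod u)
  obtain ⟨a, rfl⟩ := ZMod.ringHom_surjective PadicInt.toZMod α
  obtain ⟨b, rfl⟩ := ZMod.ringHom_surjective PadicInt.toZMod β
  by_cases ha : PadicInt.toZMod (2 * 1 * a + b * T) = 0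
  · have hb : PadicInt.toZMod (2 * N * b + a * T) ≠ 0 := by
      intro hb
      simp only [map_add, map_mul, map_ofNat, map_one] at ha hb
      -- Both partial derivatives vanish, so Cramer's rule gives `(a, b) = 0` modulo `p`.
      have ha₀ : PadicInt.toZMod a = 0 := (mul_eq_zero_iff_left hD).mp <| by
        linear_combination PadicInt.toZMod T * hb - 2 * PadicInt.toZMod N * ha
      have hb₀ : PadicInt.toZMod b = 0 := (mul_eq_zero_iff_left hD).mp <| by
        linear_combination PadicInt.toZMod T * ha - 2 * hb
      exact hu (by rw [← hαβ, ha₀, hb₀]; ring)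
    obtain ⟨z, hz⟩ := exists_root_quadratic_of_toZMod (C₀ := a ^ 2 - u)
      (by simp only [map_add, map_sub, map_mul, map_pow]; linear_combination hαβ) hb
    exact ⟨a, z, by linear_combination hz⟩
  · obtain ⟨z, hz⟩ := exists_root_quadratic_of_toZMod (C₀ := b ^ 2 * N - u)
      (by simp only [map_add, map_sub, map_mul, map_pow, map_one]; linear_combination hαβ) ha
    exact ⟨z, b, by linear_combination hz⟩

end PadicInt

section NormedExtension

variable {K L : Type*} [NontriviallyNormedField K] [NormedField L] [NormedAlgebra K L]

section Galois

variable [IsUltrametricDist K] [CompleteSpace K]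

lemma norm_algEquiv_apply [Algebra.IsAlgebraic K L] (σ : Gal(L/K)) (y : L) : ‖σ y‖ = ‖y‖ := by
  simp only [NormedAlgebra.norm_eq_spectralNorm K, ← spectralNorm_eq_of_equiv]

variable [FiniteDimensional K L] [IsGalois K L]

lemma norm_algebraNorm_eq_pow_finrank (y : L) : ‖Algebra.norm K y‖ = ‖y‖ ^ finrank K L := by
  rw [← norm_algebraMap' L, Algebra.norm_eq_prod_automorphisms, norm_prod]
  simp only [norm_algEquiv_apply, Finset.prod_const, Finset.card_univ,
    ← Nat.card_eq_fintype_card, IsGalois.card_aut_eq_finrank]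

lemma norm_algebraTrace_le (y : L) : ‖Algebra.trace K L y‖ ≤ ‖y‖ := by
  have : IsUltrametricDist L := .of_normedAlgebra K
  rw [← norm_algebraMap' L, trace_eq_sum_automorphisms]
  exact IsUltrametricDist.norm_sum_le_of_forall_le_of_nonneg (norm_nonneg y)
    fun σ _ => (norm_algEquiv_apply σ y).le

end Galois

/-- The element `t` is obtained by rescaling the difference between an element of `L` and its best
approximation in `K`. -/
lemma exists_norm_eq_one_forall_one_le_norm_add [ProperSpace K] [FiniteDimensional K L]
    (hKL : ¬ Function.Surjective (algebraMap K L)) (hval : ∀ y : L, ∃ x : K, ‖x‖ = ‖y‖) :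
    ∃ t : L, ‖t‖ = 1 ∧ ∀ c : K, 1 ≤ ‖algebraMap K L c + t‖ := by
  obtain ⟨α, hα⟩ := not_forall.mp hKL
  have : ProperSpace L := FiniteDimensional.proper K L
  let S : Submodule K L := LinearMap.range (Algebra.linearMap K L)
  obtain ⟨_, ⟨a, rfl⟩, ha⟩ :=
    S.closed_of_finiteDimensional.exists_infDist_eq_dist S.nonempty α
  have hmin (c : K) : ‖α - algebraMap K L a‖ ≤ ‖α - algebraMap K L c‖ := by
    rw [← dist_eq_norm, ← dist_eq_norm]
    exact ha.ge.trans (Metric.infDist_le_dist_of_mem ⟨c, rfl⟩)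
  obtain ⟨d, hd⟩ := hval (α - algebraMap K L a)
  have hd₀ : 0 < ‖d‖ := by
    rw [hd, norm_pos_iff, sub_ne_zero]
    exact fun h => hα ⟨a, h.symm⟩
  have hdL : algebraMap K L d ≠ 0 := by
    simpa using norm_pos_iff.mp hd₀
  refine ⟨(α - algebraMap K L a) / algebraMap K L d, ?_, fun c => ?_⟩
  · rw [norm_div, norm_algebraMap', ← hd, div_self hd₀.ne']
  · have : algebraMap K L c + (α - algebraMap K L a) / algebraMap K L d =
        (α - algebraMap K L (a - d * c)) / algebraMap K L d := by
      field_simp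
      simp only [map_sub, map_mul]
      ring
    rw [this, norm_div, norm_algebraMap', one_le_div hd₀, hd]
    exact hmin _

end NormedExtension

section UnramifiedQuadratic

variable {p : ℕ} [Fact p.Prime]

lemma padic_valuation_eq_of_norm_eq {x y : ℚ_[p]} (hx : x ≠ 0) (h : ‖x‖ = ‖y‖) :
    x.valuation = y.valuation := by
  have hy : y ≠ 0 := norm_ne_zero_iff.mp (h ▸ norm_ne_zero_iff.mpr hx)
  have hp : (1 : ℝ) < p := mod_cast (Fact.out : p.Prime).one_lt
  rw [Padic.norm_eq_zpow_neg_valuation hx, Padic.norm_eq_zpow_neg_valuation hy] at h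
  exact neg_injective (zpow_right_injective₀ (zero_lt_one.trans hp) hp.ne' h)

lemma exists_eq_zpow_sq_mul_of_even_valuation {x : ℚ_[p]} (hx : x ≠ 0) (heven : Even x.valuation) :
    ∃ (k : ℤ) (u : ℚ_[p]), ‖u‖ = 1 ∧ x = ((p : ℚ_[p]) ^ k) ^ 2 * u := by
  obtain ⟨k, hk⟩ := heven
  have hp : ((p : ℚ_[p]) ^ k) ^ 2 ≠ 0 :=
    pow_ne_zero 2 (zpow_ne_zero k (mod_cast (Fact.out : p.Prime).ne_zero))
  refine ⟨k, x / (p ^ k) ^ 2, ?_, (mul_div_cancel₀ _ hp).symm⟩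
  rw [norm_div, norm_pow, norm_zpow, Padic.norm_p, Padic.norm_eq_zpow_neg_valuation hx, hk]
  have hp' : (p : ℝ) ≠ 0 := mod_cast (Fact.out : p.Prime).ne_zero
  rw [inv_zpow', sq, ← zpow_add₀ hp', neg_add, div_self (zpow_ne_zero _ hp')]

variable {L : Type*}

section Normed

variable [NormedField L] [NormedAlgebra ℚ_[p] L] [Algebra.IsQuadraticExtension ℚ_[p] L]

lemma norm_algebraNorm_eq_sq (y : L) : ‖Algebra.norm ℚ_[p] y‖ = ‖y‖ ^ 2 := by
  rw [norm_algebraNorm_eq_pow_finrank, Algebra.IsQuadraticExtension.finrank_eq_two]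

lemma exists_trace_norm_norm_discrim_eq_one (hval : ∀ y : L, ∃ x : ℚ_[p], ‖x‖ = ‖y‖) :
    ∃ (t : L) (T N : ℤ_[p]), Algebra.trace ℚ_[p] L t = T ∧ Algebra.norm ℚ_[p] t = N ∧
      ‖T ^ 2 - 4 * N‖ = 1 := by
  have : IsUltrametricDist L := .of_normedAlgebra ℚ_[p]
  obtain ⟨t, ht, hadd⟩ :=
    exists_norm_eq_one_forall_one_le_norm_add (not_surjective_algebraMap ℚ_[p] L) hval
  let T : ℤ_[p] := ⟨Algebra.trace ℚ_[p] L t, (norm_algebraTrace_le t).trans ht.le⟩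
  let N : ℤ_[p] := ⟨Algebra.norm ℚ_[p] t, by simp [norm_algebraNorm_eq_sq, ht]⟩
  refine ⟨t, T, N, rfl, rfl, ?_⟩
  have hform (c : ℤ_[p]) : ‖c ^ 2 + c * T + N‖ = 1 := by
    have hle : ‖algebraMap ℚ_[p] L c + t‖ ≤ 1 :=
      (IsUltrametricDist.norm_add_le_max _ _).trans (by simp [ht, c.norm_le_one])
    have hnorm := norm_algebraNorm_eq_sq (p := p) (algebraMap ℚ_[p] L c + algebraMap ℚ_[p] L 1 * t)
    rw [norm_algebraMap_add_algebraMap_mul, map_one, one_mul, hle.antisymm (hadd c),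
      mul_one, one_pow, one_mul, one_pow] at hnorm
    exact hnorm
  rw [← toZMod_ne_zero_iff_norm_eq_one]
  simp only [map_sub, map_mul, map_pow, map_ofNat]
  refine discrim_ne_zero_of_forall_quadratic_ne_zero fun c => ?_
  obtain ⟨c, rfl⟩ := ZMod.ringHom_surjective PadicInt.toZMod c
  simpa using toZMod_ne_zero_iff_norm_eq_one.mpr (hform c)

lemma exists_algebraNorm_eq_of_norm_eq_one (hval : ∀ y : L, ∃ x : ℚ_[p], ‖x‖ = ‖y‖) {u : ℚ_[p]}
    (hu : ‖u‖ = 1) : ∃ y : L, Algebra.norm ℚ_[p] y = u := by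
  obtain ⟨t, T, N, hT, hN, hD⟩ := exists_trace_norm_norm_discrim_eq_one hval
  obtain ⟨a, b, hab⟩ := exists_quadratic_form_eq_of_norm_discrim_eq_one hD (u := ⟨u, hu.le⟩) hu
  refine ⟨algebraMap ℚ_[p] L a + algebraMap ℚ_[p] L b * t, ?_⟩
  rw [norm_algebraMap_add_algebraMap_mul, hT, hN]
  exact congrArg ((↑) : ℤ_[p] → ℚ_[p]) hab

lemma mem_normGroup_iff_even_valuation_of_forall_exists_norm_eq
    (hval : ∀ y : L, ∃ x : ℚ_[p], ‖x‖ = ‖y‖) {x : ℚ_[p]} (hx : x ≠ 0) :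
    x ∈ normGroup ℚ_[p] L ↔ Even x.valuation := by
  constructor
  · rintro ⟨y, -, rfl⟩
    obtain ⟨z, hz⟩ := hval y
    have hnorm : ‖Algebra.norm ℚ_[p] y‖ = ‖z ^ 2‖ := by rw [norm_algebraNorm_eq_sq, norm_pow, hz]
    simp [padic_valuation_eq_of_norm_eq hx hnorm]
  · intro heven
    obtain ⟨k, u, hu, rfl⟩ := exists_eq_zpow_sq_mul_of_even_valuation hx heven
    obtain ⟨y, rfl⟩ := exists_algebraNorm_eq_of_norm_eq_one hval hu
    have hnorm : Algebra.norm ℚ_[p] (algebraMap ℚ_[p] L (p ^ k) * y) =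
        (p ^ k) ^ 2 * Algebra.norm ℚ_[p] y := by
      rw [map_mul, Algebra.norm_algebraMap, Algebra.IsQuadraticExtension.finrank_eq_two]
    refine ⟨_, fun hzero => hx ?_, hnorm⟩
    rw [← hnorm, hzero, Algebra.norm_zero]

end Normed

section Valuation

variable [Field L] [Algebra ℚ_[p] L] {vL : L → ℤ}

open Classical in
/-- The absolute value `y ↦ p ^ (-vL y)` attached to a valuation `vL`. Since `vL` is integer-valued,
`vL 0` carries no information and the value at `0` is set separately. -/
noncomputable def IsNormalizedValuation.absoluteValue (hvL : IsNormalizedValuation p vL) :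
    AbsoluteValue L ℝ where
  toFun y := if y = 0 then 0 else (p : ℝ) ^ (-vL y)
  map_mul' x y := by
    have hp : (p : ℝ) ≠ 0 := mod_cast (Fact.out : p.Prime).ne_zero
    by_cases hx : x = 0
    · simp [hx]
    by_cases hy : y = 0
    · simp [hy]
    simp only [mul_eq_zero, hx, hy, or_self, if_false, hvL.1 x y hx hy, neg_add, zpow_add₀ hp]
  nonneg' y := by
    split_ifs <;> positivity
  eq_zero' y := by
    have hp : (p : ℝ) ≠ 0 := mod_cast (Fact.out : p.Prime).ne_zero
    simp [zpow_ne_zero _ hp]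
  add_le' x y := by
    have hp : (1 : ℝ) < p := mod_cast (Fact.out : p.Prime).one_lt
    by_cases hx : x = 0
    · simp [hx]
    by_cases hy : y = 0
    · simp [hy]
    simp only [hx, hy, if_false]
    split_ifs with hxy
    · positivity
    rcases min_le_iff.mp (hvL.2.1 x y hx hy hxy) with h | h
    · exact (zpow_le_zpow_right₀ hp.le (neg_le_neg h)).trans
        (le_add_of_nonneg_right (by positivity))
    · exact (zpow_le_zpow_right₀ hp.le (neg_le_neg h)).trans
        (le_add_of_nonneg_left (by positivity))

lemma IsNormalizedValuation.absoluteValue_algebraMap (hvL : IsNormalizedValuation p vL)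
    (hunram : ∀ x : ℚ_[p], x ≠ 0 → vL (algebraMap ℚ_[p] L x) = x.valuation) (x : ℚ_[p]) :
    hvL.absoluteValue (algebraMap ℚ_[p] L x) = ‖x‖ := by
  rcases eq_or_ne x 0 with rfl | hx
  · simp
  · simp [IsNormalizedValuation.absoluteValue, hx, hunram x hx,
      Padic.norm_eq_zpow_neg_valuation hx]

lemma IsNormalizedValuation.exists_norm_eq_absoluteValue (hvL : IsNormalizedValuation p vL)
    (y : L) : ∃ x : ℚ_[p], ‖x‖ = hvL.absoluteValue y := by
  rcases eq_or_ne y 0 with rfl | hy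
  · exact ⟨0, by simp⟩
  · exact ⟨p ^ vL y, by simp [IsNormalizedValuation.absoluteValue, hy]⟩

theorem mem_normGroup_iff_even_valuation (hL2 : finrank ℚ_[p] L = 2)
    (hvL : IsNormalizedValuation p vL)
    (hunram : ∀ x : ℚ_[p], x ≠ 0 → vL (algebraMap ℚ_[p] L x) = x.valuation)
    {x : ℚ_[p]} (hx : x ≠ 0) : x ∈ normGroup ℚ_[p] L ↔ Even x.valuation := by
  let : NormedField L := hvL.absoluteValue.toNormedField
  let : NormedAlgebra ℚ_[p] L :=
    { ‹Algebra ℚ_[p] L› with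
      norm_smul_le := fun a y => by
        rw [Algebra.smul_def, norm_mul]
        exact (congrArg (· * ‖y‖) (hvL.absoluteValue_algebraMap hunram a)).le }
  have : Algebra.IsQuadraticExtension ℚ_[p] L := ⟨hL2⟩
  exact mem_normGroup_iff_even_valuation_of_forall_exists_norm_eq
    hvL.exists_norm_eq_absoluteValue hx

end Valuation

lemma even_valuation_sq_sub_of_not_even {x e : ℚ_[p]} (hx : ¬ Even x.valuation)
    (he0 : e ≠ 0) (hve : (4 : ℤ) ∣ e.valuation) : Even (x ^ 2 - e).valuation := by
  have hx₀ : x ≠ 0 := by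
    rintro rfl
    simp at hx
  have hne : ‖x ^ 2‖ ≠ ‖-e‖ := fun h => by
    have hval := padic_valuation_eq_of_norm_eq (pow_ne_zero 2 hx₀) (h.trans (norm_neg e))
    rw [Padic.valuation_pow] at hval
    rw [Int.even_iff] at hx
    push_cast at hval
    omega
  have hmax := Padic.add_eq_max_of_ne hne
  rw [← sub_eq_add_neg, norm_neg] at hmax
  rcases max_choice ‖x ^ 2‖ ‖e‖ with h | h
  · rw [← padic_valuation_eq_of_norm_eq (pow_ne_zero 2 hx₀) (hmax.trans h).symm]
    simp
  · rw [← padic_valuation_eq_of_norm_eq he0 (hmax.trans h).symm]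
    exact even_iff_two_dvd.mpr (dvd_trans (by norm_num) hve)

end UnramifiedQuadratic

theorem stmt_14_general {p : ℕ} [Fact p.Prime]
    (L : Type*) [Field L] [Algebra ℚ_[p] L] (hL2 : finrank ℚ_[p] L = 2)
    (vL : L → ℤ) (hvL : IsNormalizedValuation p vL)
    (hunram : ∀ x : ℚ_[p], x ≠ 0 → vL (algebraMap ℚ_[p] L x) = x.valuation)
    (e : ℚ_[p]) (he0 : e ≠ 0) (hve : (4 : ℤ) ∣ e.valuation) :
    -e ∈ normGroup ℚ_[p] L ∧
    ∀ x : ℚ_[p], x ≠ 0 → x * (x ^ 2 - e) ∈ normGroup ℚ_[p] L →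
      x ∈ normGroup ℚ_[p] L ∧ x ^ 2 - e ∈ normGroup ℚ_[p] L := by
  have hmem {x : ℚ_[p]} (hx : x ≠ 0) := mem_normGroup_iff_even_valuation hL2 hvL hunram hx
  refine ⟨?_, fun x hx hprod => ?_⟩
  · have he' : -e ≠ 0 := neg_ne_zero.mpr he0
    rw [hmem he', padic_valuation_eq_of_norm_eq he' (norm_neg e)]
    exact even_iff_two_dvd.mpr (dvd_trans (by norm_num) hve)
  have : FiniteDimensional ℚ_[p] L := .of_finrank_pos (by omega)
  have hxe : x ^ 2 - e ≠ 0 := right_ne_zero_of_mul (ne_zero_of_mem_normGroup hprod)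
  rw [hmem (mul_ne_zero hx hxe), Padic.valuation_mul hx hxe, Int.even_add] at hprod
  rw [hmem hx, hmem hxe, ← hprod, and_self]
  by_contra hodd
  exact hodd (hprod.mpr (even_valuation_sq_sub_of_not_even hodd he0 hve))

/-- Theorem 1.3(1)(i), number-theoretic content: let `L` be the unramified quadratic
extension of `ℚ₂` and `e ∈ ℚ₂*` a non-square with `v₂(e) ≡ 0 (mod 4)`. Then
`-e ∈ N_{L/ℚ₂}(L*)`, and every `x ∈ ℚ₂*` with `x(x² - e) ∈ N_{L/ℚ₂}(L*)` satisfies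
`x ∈ N_{L/ℚ₂}(L*)` and `x² - e ∈ N_{L/ℚ₂}(L*)`. -/
theorem stmt_14
    (L : Type*) [Field L] [Algebra ℚ_[2] L] (hL2 : finrank ℚ_[2] L = 2)
    (vL : L → ℤ) (hvL : IsNormalizedValuation 2 vL)
    (hunram : ∀ x : ℚ_[2], x ≠ 0 → vL (algebraMap ℚ_[2] L x) = x.valuation)
    (e : ℚ_[2]) (he0 : e ≠ 0) (he : ¬ IsSquare e) (hve : (4 : ℤ) ∣ e.valuation) :
    -e ∈ normGroup ℚ_[2] L ∧
    ∀ x : ℚ_[2], x ≠ 0 → x * (x ^ 2 - e) ∈ normGroup ℚ_[2] L →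
      x ∈ normGroup ℚ_[2] L ∧ x ^ 2 - e ∈ normGroup ℚ_[2] L := by
  exact stmt_14_general L hL2 vL hvL hunram e he0 hve
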